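/- arXiv:1612.02960 — 2 statements merged into one kernel-verified Lean document; each statement's English description precedes it below -/
import Mathlib

section
/- (Selberg's lemma) Let F be a field of characteristic zero, n a natural number, and G a finitely generated subgroup of the general linear group GL(n, F). Then G has a torsion-free normal subgroup of finite index. -/
open Matrix

instance Int.isJacobsonRing : IsJacobsonRing ℤ := by
  refine isJacobsonRing_iff_prime_eq.2 fun P hP => ?_
  by_cases h : P = ⊥
  · subst h
    refine le_bot_iff.1 fun x hx => ?_
    have hu := Ideal.mem_jacobson_bot.1 hx x
    rw [Int.isUnit_iff] at hu
    have hx0 : x * x = 0 := by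
      rcases hu with hu | hu <;> nlinarith [mul_self_nonneg x]
    simpa using hx0
  · have := hP.isMaximal h
    exact Ideal.jacobson_eq_self_of_isMaximal

/-- A field that is a quotient of a finitely generated ring is finite. -/
theorem Field.finite_of_surjective_of_finiteType_int {A K : Type*} [CommRing A]
    [Algebra.FiniteType ℤ A] [Field K] (f : A →+* K) (hf : Function.Surjective f) :
    Finite K := by
  have : Algebra.FiniteType ℤ K := .of_surjective f.toIntAlgHom hf
  have hfin : Module.Finite ℤ K := finite_of_finite_type_of_isJacobsonRing ℤ K
  have hinj : ¬ Function.Injective (algebraMap ℤ K) := fun h =>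
    Int.not_isField (isField_of_isIntegral_of_isField h (Field.toIsField K))
  rw [injective_iff_map_eq_zero] at hinj
  push Not at hinj
  obtain ⟨a, ha, ha0⟩ := hinj
  refine Module.finite_of_fg_torsion K fun x => ⟨⟨a, mem_nonZeroDivisors_of_ne_zero ha0⟩, ?_⟩
  change a • x = 0
  rw [Algebra.smul_def, ha, zero_mul]

/-- The binomial expansion of `(1 + x) ^ q` modulo `x ^ 2`. -/
theorem exists_one_add_pow_eq {R : Type*} [Ring R] (x : R) (q : ℕ) :
    ∃ y, (1 + x) ^ q = 1 + q * x + x * x * y := by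
  induction q with
  | zero => exact ⟨0, by simp⟩
  | succ q ih =>
    obtain ⟨y, hy⟩ := ih
    refine ⟨q + y + x * y, ?_⟩
    have hc : x * ((q : R) * x) = x * x * q := by
      rw [mul_assoc, (Nat.cast_commute q x).eq]
    rw [pow_succ', hy]
    push_cast
    simp only [mul_add, add_mul, one_mul, mul_one, hc, mul_assoc]
    abel

/-- A matrix congruent to `1` modulo a proper ideal `I` of a Noetherian domain is trivial if its
`q`-th power is, for some `q` that is invertible modulo `I`. -/
theorem Matrix.eq_zero_of_one_add_pow_eq_one {n A : Type*} [Fintype n] [DecidableEq n]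
    [CommRing A] [IsDomain A] [IsNoetherianRing A] {I : Ideal A} (hI : I ≠ ⊤) {q : ℕ} {a : A}
    (ha : a * q - 1 ∈ I) {X : Matrix n n A} (hX : ∀ i j, X i j ∈ I) (h : (1 + X) ^ q = 1) :
    X = 0 := by
  obtain ⟨Y, hY⟩ := exists_one_add_pow_eq X q
  have hqX : (q : Matrix n n A) * X = -(X * X * Y) := by
    rw [h, add_assoc, left_eq_add] at hY
    exact eq_neg_of_add_eq_zero_left hY
  have key (k : ℕ) : ∀ i j, X i j ∈ I ^ (k + 1) := by
    induction k with
    | zero => simpa using hX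
    | succ k ih =>
      intro i j
      have hXX (i j) : (X * X) i j ∈ I ^ (k + 1 + 1) := by
        rw [mul_apply, pow_succ]
        exact Ideal.sum_mem _ fun l _ => Ideal.mul_mem_mul (ih i l) (hX l j)
      have hq : (q : A) * X i j ∈ I ^ (k + 1 + 1) := by
        have hij : (q : A) * X i j = -(X * X * Y) i j := by
          rw [← Matrix.neg_apply, ← hqX, ← nsmul_eq_mul, ← nsmul_eq_mul, Matrix.smul_apply]
        rw [hij, mul_apply]
        exact neg_mem (Ideal.sum_mem _ fun l _ => Ideal.mul_mem_right _ _ (hXX i l))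
      have hs : X i j = a * (q * X i j) - X i j * (a * q - 1) := by ring
      rw [hs]
      refine sub_mem (Ideal.mul_mem_left _ _ hq) ?_
      rw [pow_succ]
      exact Ideal.mul_mem_mul (ih i j) ha
  ext i j
  have hmem : X i j ∈ ⨅ k : ℕ, I ^ k :=
    (Submodule.mem_iInf _).2 fun k => Ideal.pow_le_pow_right k.le_succ (key k i j)
  rw [Ideal.iInf_pow_eq_bot_of_isDomain I hI] at hmem
  simpa using hmem

/-- The kernel of reduction modulo a maximal ideal `m` has no element of prime order `q ∉ m`. -/
theorem Matrix.GeneralLinearGroup.eq_one_of_map_mk_eq_one {n A : Type*} [Fintype n]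
    [DecidableEq n] [CommRing A] [IsDomain A] [IsNoetherianRing A] {m : Ideal A}
    (hm : m.IsMaximal) {q : ℕ} (hq : (q : A) ∉ m) {g : GL n A}
    (hg : GeneralLinearGroup.map (Ideal.Quotient.mk m) g = 1) (h : g ^ q = 1) : g = 1 := by
  obtain ⟨a, b, hb, hab⟩ := hm.exists_inv hq
  have hX : (g : Matrix n n A) - 1 = 0 := by
    refine Matrix.eq_zero_of_one_add_pow_eq_one hm.ne_top (q := q) (a := a) ?_ ?_ ?_
    · rw [show a * q - 1 = -b by linear_combination hab]
      exact neg_mem hb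
    · intro i j
      rw [← Ideal.Quotient.eq_zero_iff_mem, Matrix.sub_apply, map_sub, sub_eq_zero]
      have hij := (GeneralLinearGroup.ext_iff _ _).1 hg i j
      simpa [Matrix.one_apply, apply_ite (Ideal.Quotient.mk m)] using hij
    · rw [add_sub_cancel, ← Units.val_pow_eq_pow_val, h, Units.val_one]
  exact Units.ext (sub_eq_zero.1 hX)

/-- A subgroup without elements of prime order is torsion-free. -/
theorem IsOfFinOrder.eq_one_of_forall_prime {G : Type*} [Group G] {N : Subgroup G}
    (hN : ∀ y ∈ N, ∀ q : ℕ, q.Prime → y ^ q = 1 → y = 1) {x : G} (hx : x ∈ N)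
    (hfin : IsOfFinOrder x) : x = 1 := by
  by_contra hne
  have ho : orderOf x ≠ 1 := fun h => hne (orderOf_eq_one_iff.1 h)
  obtain ⟨q, hq, k, hk⟩ := Nat.exists_prime_and_dvd ho
  have hk1 : x ^ k = 1 :=
    hN _ (pow_mem hx k) q hq (by rw [← pow_mul, mul_comm, ← hk, pow_orderOf_eq_one])
  have hpos := hfin.orderOf_pos
  have hk0 : 0 < k := Nat.pos_of_ne_zero fun h => hpos.ne' (by rw [hk, h, mul_zero])
  have hle := orderOf_le_of_pow_eq_one hk0 hk1
  nlinarith [hq.two_le]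

/-- Over a domain of characteristic zero that is finitely generated as a ring, the general linear
group has a torsion-free normal subgroup of finite index. -/
theorem Matrix.GeneralLinearGroup.exists_normal_torsionFree {n A : Type*} [Fintype n]
    [DecidableEq n] [CommRing A] [IsDomain A] [CharZero A] [Algebra.FiniteType ℤ A] :
    ∃ N : Subgroup (GL n A), N.Normal ∧ N.FiniteIndex ∧ ∀ x ∈ N, IsOfFinOrder x → x = 1 := by
  have : IsNoetherianRing A := Algebra.FiniteType.isNoetherianRing ℤ A
  have : IsJacobsonRing A := isJacobsonRing_of_finiteType (A := ℤ)
  have hfinite (m : Ideal A) (hm : m.IsMaximal) : Finite (A ⧸ m) := by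
    let := Ideal.Quotient.field m
    exact Field.finite_of_surjective_of_finiteType_int (Ideal.Quotient.mk m)
      Ideal.Quotient.mk_surjective
  obtain ⟨m, hm⟩ := Ideal.exists_maximal A
  have := hfinite m hm
  obtain ⟨p, hp⟩ := CharP.exists (A ⧸ m)
  have hp0 : p ≠ 0 := CharP.char_ne_zero_of_finite (A ⧸ m) p
  have hpm : (p : A) ∈ m := by
    rw [← Ideal.Quotient.eq_zero_iff_mem, map_natCast, CharP.cast_eq_zero]
  have hpprime : p.Prime := (CharP.char_is_prime_or_zero (A ⧸ m) p).resolve_right hp0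
  obtain ⟨m', hm', hpm'⟩ : ∃ m' : Ideal A, m'.IsMaximal ∧ (p : A) ∉ m' := by
    by_contra! hall
    have hmem : (p : A) ∈ (⊥ : Ideal A).jacobson := Ideal.mem_sInf.2 fun {J} hJ => hall J hJ.2
    rw [IsJacobsonRing.out ‹_› Ideal.isPrime_bot.isRadical] at hmem
    exact hp0 (by simpa using hmem)
  have := hfinite m' hm'
  let f := GeneralLinearGroup.map (n := n) (Ideal.Quotient.mk m)
  let f' := GeneralLinearGroup.map (n := n) (Ideal.Quotient.mk m')
  refine ⟨f.ker ⊓ f'.ker, inferInstance, inferInstance, fun x hx hfin => ?_⟩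
  refine hfin.eq_one_of_forall_prime (fun y hy q hq hyq => ?_) hx
  by_cases hqm : (q : A) ∈ m
  · have hqp : q = p := by
      rw [← Ideal.Quotient.eq_zero_iff_mem, map_natCast, CharP.cast_eq_zero_iff (A ⧸ m) p] at hqm
      exact ((Nat.prime_dvd_prime_iff_eq hpprime hq).1 hqm).symm
    exact eq_one_of_map_mk_eq_one hm' (hqp ▸ hpm') hy.2 hyq
  · exact eq_one_of_map_mk_eq_one hm hqm hy.1 hyq

/-- A finitely generated subgroup of `GL n F` is defined over a finitely generated subring. -/
theorem Matrix.GeneralLinearGroup.exists_fg_le_range_map {n F : Type*} [Fintype n]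
    [DecidableEq n] [CommRing F] {G : Subgroup (GL n F)} (hG : G.FG) :
    ∃ A : Subalgebra ℤ F, A.FG ∧ G ≤ (GeneralLinearGroup.map (n := n) A.val.toRingHom).range := by
  obtain ⟨S, rfl⟩ := hG
  let E : Set F := ⋃ s ∈ S, ⋃ i, ⋃ j, {(s : Matrix n n F) i j, (s⁻¹ : GL n F).val i j}
  have hE : E.Finite :=
    S.finite_toSet.biUnion fun s _ => Set.finite_iUnion fun i => Set.finite_iUnion fun j =>
      Set.toFinite _
  have hmem (s) (hs : s ∈ S) (i j) :
      (s : Matrix n n F) i j ∈ Algebra.adjoin ℤ E ∧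
        (s⁻¹ : GL n F).val i j ∈ Algebra.adjoin ℤ E := by
    constructor <;> refine Algebra.subset_adjoin ?_ <;> simp only [E, Set.mem_iUnion]
    exacts [⟨s, hs, i, j, .inl rfl⟩, ⟨s, hs, i, j, .inr rfl⟩]
  refine ⟨Algebra.adjoin ℤ E, Subalgebra.fg_def.2 ⟨E, hE, rfl⟩, (Subgroup.closure_le _).2 ?_⟩
  intro s hs
  let B : Matrix n n (Algebra.adjoin ℤ E) := of fun i j => ⟨s.val i j, (hmem s hs i j).1⟩
  let C : Matrix n n (Algebra.adjoin ℤ E) := of fun i j => ⟨s⁻¹.val i j, (hmem s hs i j).2⟩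
  have hinj : Function.Injective
      ((Algebra.adjoin ℤ E).val.toRingHom.mapMatrix : Matrix n n _ →+* Matrix n n F) :=
    Matrix.map_injective Subtype.val_injective
  have hB : (Algebra.adjoin ℤ E).val.toRingHom.mapMatrix B = s.val := by ext; rfl
  have hC : (Algebra.adjoin ℤ E).val.toRingHom.mapMatrix C = s⁻¹.val := by ext; rfl
  refine ⟨⟨B, C, hinj ?_, hinj ?_⟩, Units.ext hB⟩
  · rw [map_mul, hB, hC, map_one, Units.mul_inv]
  · rw [map_mul, hB, hC, map_one, Units.inv_mul]

/-- **Selberg's lemma**: over a field of characteristic zero, every finitely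
generated subgroup of `GL(n, F)` has a torsion-free normal subgroup of
finite index. -/
theorem selberg_lemma (F : Type*) [Field F] [CharZero F] (n : ℕ)
    (G : Subgroup (Matrix.GeneralLinearGroup (Fin n) F)) (hG : G.FG) :
    ∃ N : Subgroup G, N.Normal ∧ N.index ≠ 0 ∧
      ∀ x ∈ N, IsOfFinOrder x → x = 1 := by
  obtain ⟨A, hA, hGA⟩ := GeneralLinearGroup.exists_fg_le_range_map hG
  have : Algebra.FiniteType ℤ A := A.fg_iff_finiteType.1 hA
  have hinj : Function.Injective (GeneralLinearGroup.map (n := Fin n) A.val.toRingHom) :=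
    Units.map_injective (Matrix.map_injective Subtype.val_injective)
  let φ : G →* GL (Fin n) A :=
    (MonoidHom.ofInjective hinj).symm.toMonoidHom.comp (Subgroup.inclusion hGA)
  have hφ : Function.Injective φ :=
    (MonoidHom.ofInjective hinj).symm.injective.comp (Subgroup.inclusion_injective hGA)
  obtain ⟨N, hN, hindex, htf⟩ := GeneralLinearGroup.exists_normal_torsionFree (n := Fin n) (A := A)
  refine ⟨N.comap φ, inferInstance, ?_, fun x hx hfin => hφ ?_⟩
  · rw [Subgroup.index_comap]
    exact mt Subgroup.index_eq_zero_of_relIndex_eq_zero hindex.index_ne_zero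
  · rw [map_one]
    exact htf _ hx (φ.isOfFinOrder hfin)
end

section
/- The triangle group T(2,3,3) is isomorphic (as a group) to the alternating group A_4, the alternating group on a four-element set. -/
/-- Relator set of the triangle group `T(a,b,c)`: the relators `x^a`, `y^b`, `z^c`
and `x·y·z` in the free group on three generators `x, y, z`. -/
def TriangleRels (a b c : ℕ) : Set (FreeGroup (Fin 3)) :=
  {FreeGroup.of 0 ^ a, FreeGroup.of 1 ^ b, FreeGroup.of 2 ^ c,
    FreeGroup.of 0 * FreeGroup.of 1 * FreeGroup.of 2}

/-- The triangle group `T(a,b,c)`. -/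
abbrev TriangleGroup (a b c : ℕ) : Type :=
  PresentedGroup (TriangleRels a b c)

section NormalForm

variable {G : Type*} [Group G] {x y : G}

/-- If `x² = y³ = (xy)³ = 1`, then `x` commutes with its conjugate `y x y⁻¹`, and conjugating
`y x y⁻¹` by `y` gives `x (y x y⁻¹)`. -/
lemma commute_conj_and_semiconjBy_conj (hx : x ^ 2 = 1) (hy : y ^ 3 = 1) (hxy : (x * y) ^ 3 = 1) :
    Commute x (y * x * y⁻¹) ∧ SemiconjBy y (y * x * y⁻¹) (x * (y * x * y⁻¹)) := by
  have hxi : x⁻¹ = x := inv_eq_of_mul_eq_one_left (by rw [← sq, hx])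
  have key : y * (y * x * y⁻¹) * y⁻¹ = (x * (y * x * y⁻¹))⁻¹ := by
    refine (inv_eq_of_mul_eq_one_right ?_).symm
    calc x * (y * x * y⁻¹) * (y * (y * x * y⁻¹) * y⁻¹)
        = (x * y) ^ 3 * (y ^ 3)⁻¹ := by simp only [pow_succ, pow_zero]; group
      _ = 1 := by rw [hxy, hy, inv_one, mul_one]
  have comm : Commute x (y * x * y⁻¹) := by
    have hb : (y * x * y⁻¹)⁻¹ = y * x * y⁻¹ := by rw [conj_inv, hxi]
    have hc : (x * (y * x * y⁻¹))⁻¹ = x * (y * x * y⁻¹) := by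
      rw [← inv_inj, ← key, conj_inv, hb]
    rwa [mul_inv_rev, hb, hxi, eq_comm] at hc
  refine ⟨comm, ?_⟩
  rw [SemiconjBy, ← mul_inv_eq_iff_eq_mul, key, mul_inv_rev, conj_inv, hxi, comm.eq]

/-- If `x² = y³ = (xy)³ = 1`, then every element of the subgroup generated by `x` and `y` has the
form `xⁱ (y x y⁻¹)ʲ yᵏ` with `i, j < 2` and `k < 3`. -/
lemma exists_normalForm_of_mem_closure (hx : x ^ 2 = 1) (hy : y ^ 3 = 1) (hxy : (x * y) ^ 3 = 1)
    {g : G} (hg : g ∈ Subgroup.closure {x, y}) :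
    ∃ p : Fin 2 × Fin 2 × Fin 3, x ^ p.1.val * (y * x * y⁻¹) ^ p.2.1.val * y ^ p.2.2.val = g := by
  obtain ⟨comm, semi⟩ := commute_conj_and_semiconjBy_conj hx hy hxy
  have hb : (y * x * y⁻¹) ^ 2 = 1 := by rw [conj_pow, hx]; group
  have semi' : SemiconjBy y x (y * x * y⁻¹) := by simp [SemiconjBy]
  generalize y * x * y⁻¹ = b at *
  have mul_x : ∀ i j k : ℕ, x * (x ^ i * b ^ j * y ^ k) = x ^ (i + 1) * b ^ j * y ^ k := by
    intro i j k
    simp only [pow_succ', mul_assoc]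
  have mul_y : ∀ i j k : ℕ, y * (x ^ i * b ^ j * y ^ k) = x ^ j * b ^ (i + j) * y ^ (k + 1) := by
    intro i j k
    have h : y * (x ^ i * b ^ j) = b ^ i * (x * b) ^ j * y :=
      ((semi'.pow_right i).mul_right (semi.pow_right j)).eq
    rw [← mul_assoc, h, comm.mul_pow, ← mul_assoc, ← (comm.pow_pow j i).eq, mul_assoc (x ^ j),
      ← pow_add, mul_assoc, ← pow_succ']
  suffices h : ∃ i j k : ℕ, x ^ i * b ^ j * y ^ k = g by
    obtain ⟨i, j, k, rfl⟩ := h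
    refine ⟨(⟨i % 2, Nat.mod_lt _ two_pos⟩, ⟨j % 2, Nat.mod_lt _ two_pos⟩,
      ⟨k % 3, Nat.mod_lt _ three_pos⟩), ?_⟩
    simp only [← pow_eq_pow_mod _ hx, ← pow_eq_pow_mod _ hb, ← pow_eq_pow_mod _ hy]
  have hxi : x⁻¹ = x := inv_eq_of_mul_eq_one_left (by rw [← sq, hx])
  have hyi : y⁻¹ = y * y := inv_eq_of_mul_eq_one_left (by rw [← hy, pow_three'])
  induction hg using Subgroup.closure_induction_left with
  | one => exact ⟨0, 0, 0, by simp⟩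
  | mul_left s hs g _ ih =>
    obtain ⟨i, j, k, rfl⟩ := ih
    obtain rfl | rfl := hs
    · exact ⟨_, _, _, (mul_x i j k).symm⟩
    · exact ⟨_, _, _, (mul_y i j k).symm⟩
  | inv_mul_cancel s hs g _ ih =>
    obtain ⟨i, j, k, rfl⟩ := ih
    obtain rfl | rfl := hs
    · exact ⟨_, _, _, by rw [hxi, mul_x]⟩
    · exact ⟨_, _, _, by rw [hyi, mul_assoc s s, mul_y, mul_y]⟩

end NormalForm

namespace TriangleGroup

variable {a b c : ℕ}

lemma of_zero_pow : (PresentedGroup.of 0 : TriangleGroup a b c) ^ a = 1 :=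
  PresentedGroup.one_of_mem (rels := TriangleRels a b c) (x := FreeGroup.of 0 ^ a)
    (by simp [TriangleRels])

lemma of_one_pow : (PresentedGroup.of 1 : TriangleGroup a b c) ^ b = 1 :=
  PresentedGroup.one_of_mem (rels := TriangleRels a b c) (x := FreeGroup.of 1 ^ b)
    (by simp [TriangleRels])

lemma of_two_pow : (PresentedGroup.of 2 : TriangleGroup a b c) ^ c = 1 :=
  PresentedGroup.one_of_mem (rels := TriangleRels a b c) (x := FreeGroup.of 2 ^ c)
    (by simp [TriangleRels])

lemma of_zero_mul_of_one :
    (PresentedGroup.of 0 * PresentedGroup.of 1 : TriangleGroup a b c) =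
      (PresentedGroup.of 2)⁻¹ :=
  eq_inv_of_mul_eq_one_left <| PresentedGroup.one_of_mem (rels := TriangleRels a b c)
    (x := FreeGroup.of 0 * FreeGroup.of 1 * FreeGroup.of 2) (by simp [TriangleRels])

lemma closure_of_zero_of_one :
    Subgroup.closure {(PresentedGroup.of 0 : TriangleGroup a b c), PresentedGroup.of 1} = ⊤ := by
  rw [eq_top_iff, ← PresentedGroup.closure_range_of, Subgroup.closure_le]
  have h0 : (PresentedGroup.of 0 : TriangleGroup a b c) ∈
      Subgroup.closure {(PresentedGroup.of 0 : TriangleGroup a b c), PresentedGroup.of 1} :=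
    Subgroup.subset_closure (by simp)
  have h1 : (PresentedGroup.of 1 : TriangleGroup a b c) ∈
      Subgroup.closure {(PresentedGroup.of 0 : TriangleGroup a b c), PresentedGroup.of 1} :=
    Subgroup.subset_closure (by simp)
  rintro _ ⟨i, rfl⟩
  fin_cases i
  · exact h0
  · exact h1
  · exact inv_mem_iff.mp (of_zero_mul_of_one (a := a) (b := b) (c := c) ▸ mul_mem h0 h1)

/-- The homomorphism from a triangle group determined by two elements satisfying the relations. -/
def lift {G : Type*} [Group G] (x y : G) (hx : x ^ a = 1) (hy : y ^ b = 1)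
    (hxy : (x * y) ^ c = 1) : TriangleGroup a b c →* G :=
  PresentedGroup.toGroup (f := ![x, y, (x * y)⁻¹]) <| by
    rintro r (rfl | rfl | rfl | rfl)
    · simpa using hx
    · simpa using hy
    · simpa only [map_pow, FreeGroup.lift_apply_of, Matrix.cons_val, inv_pow, inv_eq_one] using hxy
    · simp

section Lift

variable {G : Type*} [Group G] (x y : G) (hx : x ^ a = 1) (hy : y ^ b = 1) (hxy : (x * y) ^ c = 1)

@[simp]
lemma lift_of_zero : lift x y hx hy hxy (PresentedGroup.of 0) = x :=
  PresentedGroup.toGroup.of _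

@[simp]
lemma lift_of_one : lift x y hx hy hxy (PresentedGroup.of 1) = y :=
  PresentedGroup.toGroup.of _

end Lift

end TriangleGroup

/-- The double transposition `(0 1)(2 3)` in `A₄`. -/
def doubleTransposition : alternatingGroup (Fin 4) :=
  ⟨Equiv.swap 0 1 * Equiv.swap 2 3, Equiv.Perm.mem_alternatingGroup.mpr (by decide)⟩

/-- The three-cycle `(0 1 2)` in `A₄`. -/
def threeCycle : alternatingGroup (Fin 4) :=
  ⟨Equiv.swap 0 1 * Equiv.swap 1 2, Equiv.Perm.mem_alternatingGroup.mpr (by decide)⟩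

lemma bijective_normalForm_alternatingGroup :
    Function.Bijective fun p : Fin 2 × Fin 2 × Fin 3 ↦
      doubleTransposition ^ p.1.val * (threeCycle * doubleTransposition * threeCycle⁻¹) ^ p.2.1.val
        * threeCycle ^ p.2.2.val := by
  rw [Fintype.bijective_iff_injective_and_card]
  refine ⟨by decide +kernel, ?_⟩
  rw [← Nat.card_eq_fintype_card (α := alternatingGroup (Fin 4)), nat_card_alternatingGroup]
  simp [Nat.factorial]

/-- The triangle group `T(2,3,3)` is isomorphic to the alternating group `A₄`. -/
theorem triangleGroup_two_three_three_iso_A4 :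
    Nonempty (TriangleGroup 2 3 3 ≃* alternatingGroup (Fin 4)) := by
  let φ : TriangleGroup 2 3 3 →* alternatingGroup (Fin 4) :=
    TriangleGroup.lift doubleTransposition threeCycle (by decide) (by decide) (by decide)
  let s : Fin 2 × Fin 2 × Fin 3 → TriangleGroup 2 3 3 := fun p ↦
    PresentedGroup.of 0 ^ p.1.val *
      (PresentedGroup.of 1 * PresentedGroup.of 0 * (PresentedGroup.of 1)⁻¹) ^ p.2.1.val *
      PresentedGroup.of 1 ^ p.2.2.val
  have hs : Function.Surjective s := fun g ↦
    exists_normalForm_of_mem_closure TriangleGroup.of_zero_pow TriangleGroup.of_one_pow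
      (by rw [TriangleGroup.of_zero_mul_of_one, inv_pow, TriangleGroup.of_two_pow, inv_one])
      (by rw [TriangleGroup.closure_of_zero_of_one]; exact Subgroup.mem_top g)
  have hφs : Function.Bijective (φ ∘ s) := by
    convert bijective_normalForm_alternatingGroup using 2 with p
    simp [φ, s]
  exact ⟨MulEquiv.ofBijective φ ⟨hφs.1.of_comp_right hs, hφs.2.of_comp⟩⟩
end
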